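/- Let k ≥ 0 and let K ⊆ ℝ³ be a nonempty bounded open set. The space { r ∈ P_k³ : ∫_K r(x)·(curl v)(x) dx = 0 for all v ∈ P_{k+1}³ } is a linear subspace of P_k³ of dimension 3·d_k − 3·d_{k+1} + d_{k+2} − 1, where d_j = C(j+3,3). -/

import Mathlib

open MvPolynomial MeasureTheory

/-- The `i`-th partial derivative as a linear map on polynomials in three variables. -/
noncomputable def pd (i : Fin 3) : MvPolynomial (Fin 3) ℝ →ₗ[ℝ] MvPolynomial (Fin 3) ℝ :=
  (pderiv i).toLinearMap

/-- The gradient of a polynomial, `grad p = (∂₁p, ∂₂p, ∂₃p)`, as a linear map. -/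
noncomputable def gradLM : MvPolynomial (Fin 3) ℝ →ₗ[ℝ] (Fin 3 → MvPolynomial (Fin 3) ℝ) :=
  LinearMap.pi fun i => pd i

/-- The curl of a polynomial vector field,
`curl F = (∂₂F₃ − ∂₃F₂, ∂₃F₁ − ∂₁F₃, ∂₁F₂ − ∂₂F₁)`, as a linear map. -/
noncomputable def curlLM : (Fin 3 → MvPolynomial (Fin 3) ℝ) →ₗ[ℝ] (Fin 3 → MvPolynomial (Fin 3) ℝ) :=
  LinearMap.pi
    ![pd 1 ∘ₗ LinearMap.proj 2 - pd 2 ∘ₗ LinearMap.proj 1,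
      pd 2 ∘ₗ LinearMap.proj 0 - pd 0 ∘ₗ LinearMap.proj 2,
      pd 0 ∘ₗ LinearMap.proj 1 - pd 1 ∘ₗ LinearMap.proj 0]

/-- `P_k³`: vector fields whose three components are polynomials of total degree ≤ k. -/
noncomputable def Pvec (k : ℕ) : Submodule ℝ (Fin 3 → MvPolynomial (Fin 3) ℝ) :=
  Submodule.pi Set.univ fun _ => restrictTotalDegree (Fin 3) ℝ k

/-- The `L²(K)` inner product `(F,G)_K = ∫_K F·G dx` of two polynomial vector fields. -/
noncomputable def ipK (K : Set (Fin 3 → ℝ)) (F G : Fin 3 → MvPolynomial (Fin 3) ℝ) : ℝ :=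
  ∫ x in K, ∑ i : Fin 3, eval x (F i) * eval x (G i)

/-!
The orthogonal complement of `curl P_{k+1}³` in `P_k³` has dimension
`dim P_k³ - dim curl P_{k+1}³`, since the `L²(K)` inner product is definite on polynomial fields: a
polynomial vanishing on an open set is zero. By rank-nullity, `dim curl P_{k+1}³` follows from
exactness of the polynomial de Rham complex `ℝ → P_{k+2} → P_{k+1}³ → P_k³`: a polynomial field with
symmetric Jacobian is the gradient of its line integral along rays from the origin, by Euler's
identity `(1 + ∑ Xⱼ ∂ⱼ) ∫₀¹ p(t x) dt = p(x)`.
-/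

open Module
open scoped Topology

section LinearAlgebra

variable {𝕜 V W : Type*} [Field 𝕜] [AddCommGroup V] [Module 𝕜 V] [AddCommGroup W] [Module 𝕜 W]

theorem finrank_map_add_finrank_inf_ker (f : V →ₗ[𝕜] W) (S : Submodule 𝕜 V)
    [FiniteDimensional 𝕜 S] :
    finrank 𝕜 (S.map f) + finrank 𝕜 (S ⊓ LinearMap.ker f : Submodule 𝕜 V) = finrank 𝕜 S := by
  rw [← LinearMap.range_domRestrict, ← Submodule.map_comap_subtype,
    Submodule.finrank_map_subtype_eq, ← LinearMap.ker_domRestrict]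
  exact LinearMap.finrank_range_add_finrank_ker (f.domRestrict S)

theorem finrank_inf_orthogonal_add_finrank {B : LinearMap.BilinForm 𝕜 V} {P S : Submodule 𝕜 V}
    [FiniteDimensional 𝕜 P] (hB : (B.restrict P).Nondegenerate) (hSP : S ≤ P) :
    finrank 𝕜 (P ⊓ B.orthogonal S : Submodule 𝕜 V) + finrank 𝕜 S = finrank 𝕜 P := by
  have map_orthogonal : ((B.restrict P).orthogonal (S.comap P.subtype)).map P.subtype =
      P ⊓ B.orthogonal S := by
    ext x
    constructor
    · rintro ⟨y, hy, rfl⟩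
      exact ⟨y.2, fun s hs => hy ⟨s, hSP hs⟩ hs⟩
    · rintro ⟨hxP, hx⟩
      exact ⟨⟨x, hxP⟩, fun s hs => hx s hs, rfl⟩
  have finrank_comap : finrank 𝕜 (S.comap P.subtype) = finrank 𝕜 S :=
    (Submodule.comapSubtypeEquivOfLe hSP).finrank_eq
  rw [← map_orthogonal, Submodule.finrank_map_subtype_eq,
    LinearMap.BilinForm.finrank_orthogonal hB, finrank_comap]
  exact Nat.sub_add_cancel (Submodule.finrank_mono hSP)

theorem finrank_pi_univ_const (ι : Type*) [Fintype ι] (S : Submodule 𝕜 V) [FiniteDimensional 𝕜 S] :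
    finrank 𝕜 (Submodule.pi Set.univ fun _ : ι => S) = Fintype.card ι * finrank 𝕜 S := by
  have range_eq := LinearMap.range_compLeft S.subtype ι
  rw [Submodule.range_subtype] at range_eq
  rw [← range_eq, LinearMap.finrank_range_of_inj (S.injective_subtype.comp_left),
    finrank_pi_fintype, Finset.sum_const, Finset.card_univ, smul_eq_mul]

theorem finiteDimensional_pi_univ_const (ι : Type*) [Finite ι] (S : Submodule 𝕜 V)
    [FiniteDimensional 𝕜 S] :
    FiniteDimensional 𝕜 (Submodule.pi Set.univ fun _ : ι => S) := by
  have range_eq := LinearMap.range_compLeft S.subtype ι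
  rw [Submodule.range_subtype] at range_eq
  rw [← range_eq]
  infer_instance

end LinearAlgebra

section TotalDegree

variable {σ R : Type*}

theorem ncard_sum_le_eq_choose (σ : Type*) [Fintype σ] (m : ℕ) :
    {s : σ →₀ ℕ | (s.sum fun _ e => e) ≤ m}.ncard =
      (m + Fintype.card σ).choose (Fintype.card σ) := by
  classical
  have eq_biUnion : {s : σ →₀ ℕ | (s.sum fun _ e => e) ≤ m} =
      ((Finset.range (m + 1)).biUnion (Finset.finsuppAntidiag Finset.univ) :
        Finset (σ →₀ ℕ)) := by
    ext s
    simp [Finsupp.sum_fintype]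
  have disjoint : (Finset.range (m + 1) : Set ℕ).PairwiseDisjoint
      (Finset.finsuppAntidiag (Finset.univ : Finset σ)) := by
    intro i _ j _ hij
    refine Finset.disjoint_left.2 fun s hi hj => hij ?_
    rw [← (Finset.mem_finsuppAntidiag.1 hi).1, (Finset.mem_finsuppAntidiag.1 hj).1]
  rw [eq_biUnion, Set.ncard_coe_finset, Finset.card_biUnion disjoint]
  simp only [Finset.card_finsuppAntidiag_nat_eq_multichoose, Finset.card_univ]
  exact Nat.sum_range_multichoose m _

theorem finrank_restrictTotalDegree (σ R : Type*) [Fintype σ] [CommRing R] [Nontrivial R] (m : ℕ) :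
    finrank R (restrictTotalDegree σ R m) = (m + Fintype.card σ).choose (Fintype.card σ) := by
  rw [← ncard_sum_le_eq_choose, ← Nat.card_coe_set_eq]
  exact finrank_eq_nat_card_basis (basisRestrictSupport R _)

theorem mem_restrictTotalDegree_iff_coeff [CommSemiring R] {m : ℕ} {p : MvPolynomial σ R} :
    p ∈ restrictTotalDegree σ R m ↔ ∀ s, coeff s p ≠ 0 → s.degree ≤ m := by
  simp only [mem_restrictTotalDegree, totalDegree, Finset.sup_le_iff,
    MvPolynomial.mem_support_iff]
  rfl

theorem pderiv_mem_restrictTotalDegree [CommSemiring R] {m : ℕ} (i : σ) {p : MvPolynomial σ R}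
    (hp : p ∈ restrictTotalDegree σ R (m + 1)) : pderiv i p ∈ restrictTotalDegree σ R m := by
  rw [mem_restrictTotalDegree_iff_coeff] at hp ⊢
  intro s hs
  rw [coeff_pderiv] at hs
  simpa using hp _ (left_ne_zero_of_mul hs)

theorem X_mul_mem_restrictTotalDegree [CommSemiring R] {m : ℕ} (i : σ) {p : MvPolynomial σ R}
    (hp : p ∈ restrictTotalDegree σ R m) : X i * p ∈ restrictTotalDegree σ R (m + 1) := by
  rw [mem_restrictTotalDegree] at hp ⊢
  have totalDegree_X_le : (X i : MvPolynomial σ R).totalDegree ≤ 1 :=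
    (totalDegree_monomial_le (Finsupp.single i 1) (1 : R)).trans (by simp)
  rw [add_comm m]
  exact (totalDegree_mul _ _).trans (add_le_add totalDegree_X_le hp)

end TotalDegree

section PartialDerivatives

variable {σ R : Type*}

theorem pderiv_pderiv_comm [CommSemiring R] (i j : σ) (p : MvPolynomial σ R) :
    pderiv i (pderiv j p) = pderiv j (pderiv i p) := by
  obtain rfl | hij := eq_or_ne i j
  · rfl
  · ext s
    simp only [coeff_pderiv, Finsupp.add_apply, Finsupp.single_eq_of_ne hij,
      Finsupp.single_eq_of_ne hij.symm, add_zero]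
    rw [add_right_comm, mul_right_comm]

theorem eq_C_coeff_zero_of_pderiv_eq_zero [CommSemiring R] [NoZeroDivisors R] [CharZero R]
    {p : MvPolynomial σ R} (hp : ∀ i, pderiv i p = 0) : p = C (coeff 0 p) := by
  classical
  ext s
  rw [coeff_C]
  split_ifs with hs
  · rw [hs]
  · obtain ⟨i, hi⟩ := Finsupp.ne_iff.1 (Ne.symm hs)
    have hsi : s - Finsupp.single i 1 + Finsupp.single i 1 = s :=
      tsub_add_cancel_of_le (Finsupp.single_le_iff.2 (Nat.one_le_iff_ne_zero.2 hi))
    have coeff_eq := coeff_pderiv (i := i) p (s - Finsupp.single i 1)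
    rw [hp i, coeff_zero, hsi, eq_comm, mul_eq_zero] at coeff_eq
    exact coeff_eq.resolve_right (Nat.cast_add_one_ne_zero _)

end PartialDerivatives

section Poincare

variable {σ R : Type*}

section CommSemiring

variable [CommSemiring R]

/-- The diagonal operator on polynomials that multiplies every monomial of total degree `n` by
`f n`. The factors `f n = n` give the Euler operator `∑ Xᵢ ∂ᵢ`, and `f n = 1 / (n + 1)` gives the
ray average `p ↦ ∫₀¹ p(t x) dt`. -/
noncomputable def degreeMultiplier (f : ℕ → R) : MvPolynomial σ R →ₗ[R] MvPolynomial σ R :=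
  (basisMonomials σ R).constr R fun s => monomial s (f s.degree)

theorem degreeMultiplier_monomial (f : ℕ → R) (s : σ →₀ ℕ) (a : R) :
    degreeMultiplier f (monomial s a) = monomial s (f s.degree * a) := by
  have monomial_eq : monomial s a = a • basisMonomials σ R s := by simp [smul_monomial]
  rw [monomial_eq, map_smul, degreeMultiplier, Basis.constr_basis, smul_monomial, smul_eq_mul,
    mul_comm]

theorem coeff_degreeMultiplier (f : ℕ → R) (p : MvPolynomial σ R) (s : σ →₀ ℕ) :
    coeff s (degreeMultiplier f p) = f s.degree * coeff s p := by
  classical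
  induction p using MvPolynomial.induction_on' with
  | add p q hp hq => rw [map_add, coeff_add, coeff_add, hp, hq, mul_add]
  | monomial u a =>
    rw [degreeMultiplier_monomial, coeff_monomial, coeff_monomial]
    split_ifs with hus
    · rw [hus]
    · rw [mul_zero]

theorem degreeMultiplier_mem_restrictTotalDegree (f : ℕ → R) {m : ℕ} {p : MvPolynomial σ R}
    (hp : p ∈ restrictTotalDegree σ R m) : degreeMultiplier f p ∈ restrictTotalDegree σ R m := by
  rw [mem_restrictTotalDegree_iff_coeff] at hp ⊢
  intro s hs
  rw [coeff_degreeMultiplier] at hs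
  exact hp s (right_ne_zero_of_mul hs)

theorem pderiv_degreeMultiplier (f : ℕ → R) (i : σ) (p : MvPolynomial σ R) :
    pderiv i (degreeMultiplier f p) = degreeMultiplier (fun n => f (n + 1)) (pderiv i p) := by
  ext s
  rw [coeff_pderiv, coeff_degreeMultiplier, coeff_degreeMultiplier, coeff_pderiv, map_add,
    Finsupp.degree_single, mul_assoc]

theorem sum_X_mul_pderiv_eq_degreeMultiplier [Fintype σ] (p : MvPolynomial σ R) :
    ∑ i, X i * pderiv i p = degreeMultiplier (fun n => (n : R)) p := by
  induction p using MvPolynomial.induction_on' with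
  | add p q hp hq => simp only [map_add, mul_add, Finset.sum_add_distrib, hp, hq]
  | monomial s a =>
    simp only [X_mul_pderiv_monomial, degreeMultiplier_monomial, smul_monomial, nsmul_eq_mul]
    rw [← map_sum, ← Finset.sum_mul, ← Nat.cast_sum, ← Finsupp.degree_eq_sum]

end CommSemiring

variable [Fintype σ] [Semifield R]

/-- The polynomial `∑ⱼ Xⱼ ∫₀¹ Fⱼ(t x) dt`, i.e. the line integral of the vector field `F` along the
segment from the origin to `x`. It is a potential of `F` when `F` is closed. -/
noncomputable def radialPotential (F : σ → MvPolynomial σ R) : MvPolynomial σ R :=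
  ∑ j, X j * degreeMultiplier (fun n => ((n : R) + 1)⁻¹) (F j)

theorem radialPotential_mem_restrictTotalDegree {m : ℕ} {F : σ → MvPolynomial σ R}
    (hF : ∀ j, F j ∈ restrictTotalDegree σ R m) :
    radialPotential F ∈ restrictTotalDegree σ R (m + 1) :=
  Submodule.sum_mem _ fun j _ =>
    X_mul_mem_restrictTotalDegree j (degreeMultiplier_mem_restrictTotalDegree _ (hF j))

theorem pderiv_radialPotential [CharZero R] {F : σ → MvPolynomial σ R}
    (hF : ∀ i j, pderiv i (F j) = pderiv j (F i)) (i : σ) :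
    pderiv i (radialPotential F) = F i := by
  classical
  set avg : MvPolynomial σ R →ₗ[R] MvPolynomial σ R :=
    degreeMultiplier fun n => ((n : R) + 1)⁻¹
  have pderiv_term (j : σ) : pderiv i (X j * avg (F j)) =
      (if j = i then avg (F j) else 0) + X j * pderiv j (avg (F i)) := by
    rw [pderiv_mul, pderiv_degreeMultiplier, pderiv_degreeMultiplier, hF i j, pderiv_X,
      Pi.single_apply, ite_mul, one_mul, zero_mul]
  have potential_eq : radialPotential F = ∑ j, X j * avg (F j) := rfl
  have pderiv_eq : pderiv i (radialPotential F) =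
      avg (F i) + degreeMultiplier (fun n => (n : R)) (avg (F i)) := by
    simp only [potential_eq, map_sum, pderiv_term, Finset.sum_add_distrib,
      Finset.sum_ite_eq', Finset.mem_univ, if_true, sum_X_mul_pderiv_eq_degreeMultiplier]
  ext s
  have hs : (s.degree : R) + 1 ≠ 0 := Nat.cast_add_one_ne_zero _
  rw [pderiv_eq, coeff_add]
  simp only [avg, coeff_degreeMultiplier]
  rw [← one_add_mul, add_comm, mul_inv_cancel_left₀ hs]

end Poincare

section GradCurl

theorem mem_Pvec_iff {m : ℕ} {F : Fin 3 → MvPolynomial (Fin 3) ℝ} :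
    F ∈ Pvec m ↔ ∀ i, F i ∈ restrictTotalDegree (Fin 3) ℝ m := by
  simp [Pvec, Submodule.mem_pi]

instance finiteDimensional_Pvec (m : ℕ) : FiniteDimensional ℝ (Pvec m) :=
  finiteDimensional_pi_univ_const (Fin 3) (restrictTotalDegree (Fin 3) ℝ m)

theorem finrank_Pvec (m : ℕ) : finrank ℝ (Pvec m) = 3 * (m + 3).choose 3 := by
  rw [Pvec, finrank_pi_univ_const, finrank_restrictTotalDegree, Fintype.card_fin]

theorem gradLM_eq_zero_iff {p : MvPolynomial (Fin 3) ℝ} :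
    gradLM p = 0 ↔ p ∈ Submodule.span ℝ {1} := by
  rw [Submodule.mem_span_singleton]
  constructor
  · intro h
    refine ⟨coeff 0 p, ?_⟩
    rw [smul_eq_C_mul, mul_one]
    exact (eq_C_coeff_zero_of_pderiv_eq_zero fun i => congrFun h i).symm
  · rintro ⟨a, rfl⟩
    ext1 i
    simp [gradLM, pd]

theorem curlLM_eq_zero_iff {F : Fin 3 → MvPolynomial (Fin 3) ℝ} :
    curlLM F = 0 ↔ ∀ i j, pderiv i (F j) = pderiv j (F i) := by
  have component_zero_iff : curlLM F = 0 ↔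
      pderiv 1 (F 2) = pderiv 2 (F 1) ∧ pderiv 2 (F 0) = pderiv 0 (F 2) ∧
        pderiv 0 (F 1) = pderiv 1 (F 0) := by
    simp [funext_iff, Fin.forall_fin_succ, curlLM, pd, sub_eq_zero]
  rw [component_zero_iff]
  constructor
  · rintro ⟨h₁₂, h₂₀, h₀₁⟩ i j
    fin_cases i <;> fin_cases j <;> first | rfl | assumption | (symm; assumption)
  · exact fun h => ⟨h 1 2, h 2 0, h 0 1⟩

theorem map_gradLM_restrictTotalDegree (m : ℕ) :
    (restrictTotalDegree (Fin 3) ℝ (m + 1)).map gradLM = Pvec m ⊓ LinearMap.ker curlLM := by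
  ext F
  constructor
  · rintro ⟨p, hp, rfl⟩
    exact ⟨mem_Pvec_iff.2 fun i => pderiv_mem_restrictTotalDegree i hp,
      curlLM_eq_zero_iff.2 fun i j => pderiv_pderiv_comm i j p⟩
  · rintro ⟨hF, hcurl⟩
    exact ⟨radialPotential F, radialPotential_mem_restrictTotalDegree (mem_Pvec_iff.1 hF),
      funext (pderiv_radialPotential (curlLM_eq_zero_iff.1 hcurl))⟩

theorem map_curlLM_Pvec_le (m : ℕ) : (Pvec (m + 1)).map curlLM ≤ Pvec m := by
  rintro _ ⟨v, hv, rfl⟩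
  have pderiv_mem (i j : Fin 3) : pderiv i (v j) ∈ restrictTotalDegree (Fin 3) ℝ m :=
    pderiv_mem_restrictTotalDegree i (mem_Pvec_iff.1 hv j)
  rw [mem_Pvec_iff]
  intro i
  fin_cases i <;> exact Submodule.sub_mem _ (pderiv_mem _ _) (pderiv_mem _ _)

theorem finrank_map_gradLM (m : ℕ) :
    finrank ℝ ((restrictTotalDegree (Fin 3) ℝ m).map gradLM) + 1 = (m + 3).choose 3 := by
  have inf_ker : restrictTotalDegree (Fin 3) ℝ m ⊓ LinearMap.ker gradLM =
      Submodule.span ℝ {1} := by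
    ext p
    rw [Submodule.mem_inf, LinearMap.mem_ker, gradLM_eq_zero_iff, and_iff_right_iff_imp]
    refine fun hp => (Submodule.span_singleton_le_iff_mem _ _).2 ?_ hp
    simp [mem_restrictTotalDegree]
  have rank_nullity := finrank_map_add_finrank_inf_ker gradLM (restrictTotalDegree (Fin 3) ℝ m)
  rwa [inf_ker, finrank_span_singleton one_ne_zero, finrank_restrictTotalDegree,
    Fintype.card_fin] at rank_nullity

theorem finrank_map_curlLM (m : ℕ) :
    finrank ℝ ((Pvec m).map curlLM) + (m + 1 + 3).choose 3 = 3 * (m + 3).choose 3 + 1 := by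
  have rank_nullity := finrank_map_add_finrank_inf_ker curlLM (Pvec m)
  rw [← map_gradLM_restrictTotalDegree, finrank_Pvec] at rank_nullity
  rw [← finrank_map_gradLM, ← rank_nullity, add_assoc]

end GradCurl

section L2

theorem eq_zero_of_eventually_eval_eq_zero {σ R : Type*} [CommRing R] [IsDomain R]
    [TopologicalSpace R] [T1Space R] [∀ a : R, (𝓝[≠] a).NeBot] {p : MvPolynomial σ R} {x : σ → R}
    (hp : ∀ᶠ y in 𝓝 x, eval y p = 0) : p = 0 := by
  rw [nhds_pi, Filter.Eventually, Filter.mem_pi] at hp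
  obtain ⟨I, -, t, ht, hIt⟩ := hp
  refine funext_set t (fun i => infinite_of_mem_nhds (x i) (ht i)) fun y hy => ?_
  rw [map_zero]
  exact hIt fun i _ => hy i (Set.mem_univ i)

theorem integrableOn_eval_of_isBounded {σ : Type*} [Fintype σ] {K : Set (σ → ℝ)}
    (hK : Bornology.IsBounded K) (p : MvPolynomial σ ℝ) : IntegrableOn (fun x => eval x p) K :=
  ((continuous_eval p).continuousOn.integrableOn_compact hK.isCompact_closure).mono_set
    subset_closure

/-- Integration over `K` as a linear functional on polynomials. Integrability is required because
the Bochner integral of a non-integrable function is `0`, which would destroy additivity. -/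
noncomputable def integralLM {σ : Type*} [Fintype σ] (K : Set (σ → ℝ))
    (hK : ∀ p : MvPolynomial σ ℝ, IntegrableOn (fun x => eval x p) K) :
    MvPolynomial σ ℝ →ₗ[ℝ] ℝ where
  toFun p := ∫ x in K, eval x p
  map_add' p q := by simp only [map_add, integral_add (hK p) (hK q)]
  map_smul' c p := by simp only [smul_eval, integral_const_mul, RingHom.id_apply, smul_eq_mul]

theorem ipK_comm (K : Set (Fin 3 → ℝ)) (F G : Fin 3 → MvPolynomial (Fin 3) ℝ) :
    ipK K F G = ipK K G F := by
  simp only [ipK, mul_comm]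

theorem eq_zero_of_ipK_self_eq_zero {K : Set (Fin 3 → ℝ)}
    (hK : ∀ p : MvPolynomial (Fin 3) ℝ, IntegrableOn (fun x => eval x p) K)
    (hKi : (interior K).Nonempty) {F : Fin 3 → MvPolynomial (Fin 3) ℝ} (hF : ipK K F F = 0) :
    F = 0 := by
  have nonneg (x : Fin 3 → ℝ) : 0 ≤ ∑ i, eval x (F i) * eval x (F i) :=
    Finset.sum_nonneg fun i _ => mul_self_nonneg _
  have integrable : IntegrableOn (fun x => ∑ i, eval x (F i) * eval x (F i)) K := by
    simpa only [map_sum, map_mul] using hK (∑ i, F i * F i)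
  have continuous : Continuous fun x => ∑ i, eval x (F i) * eval x (F i) :=
    continuous_finsetSum _ fun i _ => (continuous_eval _).mul (continuous_eval _)
  have ae_zero := (integral_eq_zero_iff_of_nonneg nonneg integrable).1 hF
  have zero_on_interior : Set.EqOn (fun x => ∑ i, eval x (F i) * eval x (F i)) 0 (interior K) :=
    Measure.eqOn_open_of_ae_eq (ae_restrict_of_ae_restrict_of_subset interior_subset ae_zero)
      isOpen_interior continuous.continuousOn continuousOn_const
  obtain ⟨x, hx⟩ := hKi
  ext1 i
  refine eq_zero_of_eventually_eval_eq_zero (x := x) ?_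
  filter_upwards [isOpen_interior.mem_nhds hx] with y hy
  have sq_zero := (Finset.sum_eq_zero_iff_of_nonneg fun j _ => mul_self_nonneg _).1
    (zero_on_interior hy) i (Finset.mem_univ i)
  exact mul_self_eq_zero.1 sq_zero

variable {K : Set (Fin 3 → ℝ)}
  (hK : ∀ p : MvPolynomial (Fin 3) ℝ, IntegrableOn (fun x => eval x p) K)

/-- The inner product `ipK K` as a bilinear form on polynomial vector fields. -/
noncomputable def ipForm : LinearMap.BilinForm ℝ (Fin 3 → MvPolynomial (Fin 3) ℝ) :=
  (dotProductBilin ℝ ℝ).compr₂ (integralLM K hK)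

theorem ipForm_apply (F G : Fin 3 → MvPolynomial (Fin 3) ℝ) : ipForm hK F G = ipK K F G := by
  change ∫ x in K, eval x (F ⬝ᵥ G) = _
  simp only [dotProduct, map_sum, map_mul, ipK]

theorem nondegenerate_restrict_ipForm (hKi : (interior K).Nonempty)
    (P : Submodule ℝ (Fin 3 → MvPolynomial (Fin 3) ℝ)) :
    ((ipForm hK).restrict P).Nondegenerate := by
  have definite (F : P) (hF : ipForm hK F F = 0) : F = 0 :=
    Subtype.ext (eq_zero_of_ipK_self_eq_zero hK hKi (ipForm_apply hK F F ▸ hF))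
  exact ⟨fun F hF => definite F (hF F), fun F hF => definite F (hF F)⟩

theorem mem_orthogonal_map_curlLM_iff {P : Submodule ℝ (Fin 3 → MvPolynomial (Fin 3) ℝ)}
    {r : Fin 3 → MvPolynomial (Fin 3) ℝ} :
    r ∈ (ipForm hK).orthogonal (P.map curlLM) ↔ ∀ v ∈ P, ipK K r (curlLM v) = 0 := by
  simp [LinearMap.BilinForm.mem_orthogonal_iff, ipForm_apply, ipK_comm K r]

end L2

theorem stmt6_general (k : ℕ) (K : Set (Fin 3 → ℝ)) (hKi : (interior K).Nonempty)
    (hK : ∀ p : MvPolynomial (Fin 3) ℝ, IntegrableOn (fun x => eval x p) K) :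
    ∃ S : Submodule ℝ (Fin 3 → MvPolynomial (Fin 3) ℝ),
      (S : Set (Fin 3 → MvPolynomial (Fin 3) ℝ))
        = {r | r ∈ Pvec k ∧ ∀ v ∈ Pvec (k + 1), ipK K r (curlLM v) = 0} ∧
      S ≤ Pvec k ∧
      Module.finrank ℝ S + 3 * Nat.choose (k + 1 + 3) 3 + 1
        = 3 * Nat.choose (k + 3) 3 + Nat.choose (k + 2 + 3) 3 := by
  refine ⟨Pvec k ⊓ (ipForm hK).orthogonal ((Pvec (k + 1)).map curlLM), ?_, inf_le_left, ?_⟩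
  · ext r
    exact and_congr_right fun _ => mem_orthogonal_map_curlLM_iff hK
  · have finrank_orthogonal := finrank_inf_orthogonal_add_finrank
      (nondegenerate_restrict_ipForm hK hKi (Pvec k)) (map_curlLM_Pvec_le k)
    have finrank_curl : finrank ℝ ((Pvec (k + 1)).map curlLM) + (k + 2 + 3).choose 3 =
        3 * (k + 1 + 3).choose 3 + 1 := finrank_map_curlLM (k + 1)
    rw [finrank_Pvec] at finrank_orthogonal
    omega

/-- On a nonempty bounded open set `K ⊆ ℝ³`, the set
`{ r ∈ P_k³ : (r, curl v)_K = 0 for all v ∈ P_{k+1}³ }` is a linear subspace of `P_k³`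
of dimension `3·d_k − 3·d_{k+1} + d_{k+2} − 1` (stated additively), `d_j = C(j+3,3)`. -/
theorem stmt6 (k : ℕ) (K : Set (Fin 3 → ℝ)) (hKo : IsOpen K) (hKne : K.Nonempty)
    (hKb : Bornology.IsBounded K) :
    ∃ S : Submodule ℝ (Fin 3 → MvPolynomial (Fin 3) ℝ),
      (S : Set (Fin 3 → MvPolynomial (Fin 3) ℝ))
        = {r | r ∈ Pvec k ∧ ∀ v ∈ Pvec (k + 1), ipK K r (curlLM v) = 0} ∧
      S ≤ Pvec k ∧
      Module.finrank ℝ S + 3 * Nat.choose (k + 1 + 3) 3 + 1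
        = 3 * Nat.choose (k + 3) 3 + Nat.choose (k + 2 + 3) 3 := by
  exact stmt6_general k K (by rwa [hKo.interior_eq]) (integrableOn_eval_of_isBounded hKb)
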